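/- Let G be a finite simple undirected graph containing a variable gadget V_x for vertices s and t. In any non-transitive st-orientation of G, exactly one of the two edges denoted x and x̄ of V_x is oriented exiting V_x and the other is oriented entering V_x. -/

import Mathlib

variable {V : Type*}

/-- `D` is an orientation of `G`: every directed edge lies on an edge of `G`,
and every edge of `G` receives exactly one of the two possible directions. -/
def IsOrientation (G : SimpleGraph V) (D : V → V → Prop) : Prop :=
  (∀ u v, D u v → G.Adj u v) ∧ ∀ u v, G.Adj u v → (D u v ↔ ¬ D v u)

/-- A digraph is acyclic if it has no directed cycle. -/
def DigraphAcyclic (D : V → V → Prop) : Prop :=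
  ∀ v, ¬ Relation.TransGen D v v

/-- An st-orientation: an acyclic orientation with unique source `s` and unique sink `t`. -/
def IsSTOrientation (G : SimpleGraph V) (D : V → V → Prop) (s t : V) : Prop :=
  IsOrientation G D ∧ DigraphAcyclic D ∧
    (∀ u, ¬ D u s) ∧ (∀ v, (∀ u, ¬ D u v) → v = s) ∧
    (∀ u, ¬ D t u) ∧ (∀ v, (∀ u, ¬ D v u) → v = t)

/-- A directed edge `(u,v)` is transitive if there is a directed path from `u` to `v`
of length at least 2. -/
def TransEdge (D : V → V → Prop) (u v : V) : Prop :=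
  D u v ∧ ∃ w, D u w ∧ Relation.TransGen D w v

/-- A non-transitive st-orientation: an st-orientation with no transitive edge. -/
def IsNonTransSTOrientation (G : SimpleGraph V) (D : V → V → Prop) (s t : V) : Prop :=
  IsSTOrientation G D s t ∧ ∀ u v, ¬ TransEdge D u v

/-- A fork gadget in `G`: six vertices `v, m1, m2, x, w, z` with the prescribed internal
edges, three boundary edges `e1 = {a,v}`, `e9 = {w,b}`, `e10 = {z,c}` to outside vertices
`a, b, c`, and no other incident edges at the six fork vertices. -/
structure ForkGadget (G : SimpleGraph V) where
  a : V
  v : V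
  m1 : V
  m2 : V
  x : V
  w : V
  z : V
  b : V
  c : V
  distinct : List.Pairwise (· ≠ ·) [v, m1, m2, x, w, z]
  a_outside : a ∉ [v, m1, m2, x, w, z]
  b_outside : b ∉ [v, m1, m2, x, w, z]
  c_outside : c ∉ [v, m1, m2, x, w, z]
  nbr_v : ∀ u, G.Adj v u ↔ u = a ∨ u = m1 ∨ u = x ∨ u = m2
  nbr_m1 : ∀ u, G.Adj m1 u ↔ u = v ∨ u = w
  nbr_m2 : ∀ u, G.Adj m2 u ↔ u = v ∨ u = z
  nbr_x : ∀ u, G.Adj x u ↔ u = v ∨ u = w ∨ u = z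
  nbr_w : ∀ u, G.Adj w u ↔ u = m1 ∨ u = x ∨ u = b
  nbr_z : ∀ u, G.Adj z u ↔ u = m2 ∨ u = x ∨ u = c

/-- A variable gadget `V_x` in `G` for vertices `s` and `t`: two fork gadgets `Fx` and
`Fnx`, together with two length-4 paths `s-p1-p2-p3-t` and `s-q1-q2-q3-t`; the boundary
edge `e1` of `Fx` (resp. `Fnx`) attaches to the middle vertex `p2` (resp. `q2`), the
boundary edge `e10` of `Fnx` is identified with the boundary edge `e9` of `Fx`, and the
remaining boundary edges `e10` of `Fx` (denoted `x`) and `e9` of `Fnx` (denoted `x̄`)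
join the gadget to the rest of `G`. -/
structure VariableGadget (G : SimpleGraph V) (s t : V) where
  Fx : ForkGadget G
  Fnx : ForkGadget G
  p1 : V
  p2 : V
  p3 : V
  q1 : V
  q2 : V
  q3 : V
  attach_x : Fx.a = p2
  attach_nx : Fnx.a = q2
  ident_c : Fnx.c = Fx.w
  ident_b : Fx.b = Fnx.z
  nbr_p1 : ∀ u, G.Adj p1 u ↔ u = s ∨ u = p2
  nbr_p2 : ∀ u, G.Adj p2 u ↔ u = p1 ∨ u = p3 ∨ u = Fx.v
  nbr_p3 : ∀ u, G.Adj p3 u ↔ u = p2 ∨ u = t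
  nbr_q1 : ∀ u, G.Adj q1 u ↔ u = s ∨ u = q2
  nbr_q2 : ∀ u, G.Adj q2 u ↔ u = q1 ∨ u = q3 ∨ u = Fnx.v
  nbr_q3 : ∀ u, G.Adj q3 u ↔ u = q2 ∨ u = t
  distinct : List.Pairwise (· ≠ ·)
    [s, t, p1, p2, p3, q1, q2, q3, Fx.v, Fx.m1, Fx.m2, Fx.x, Fx.w, Fx.z,
     Fnx.v, Fnx.m1, Fnx.m2, Fnx.x, Fnx.w, Fnx.z]
  edgeX_outside : Fx.c ∉
    [p1, p2, p3, q1, q2, q3, Fx.v, Fx.m1, Fx.m2, Fx.x, Fx.w, Fx.z,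
     Fnx.v, Fnx.m1, Fnx.m2, Fnx.x, Fnx.w, Fnx.z]
  edgeNX_outside : Fnx.b ∉
    [p1, p2, p3, q1, q2, q3, Fx.v, Fx.m1, Fx.m2, Fx.x, Fx.w, Fx.z,
     Fnx.v, Fnx.m1, Fnx.m2, Fnx.x, Fnx.w, Fnx.z]

/-!
If no edge is transitive, the ends of a directed walk of length at least two are not adjacent.
Hence a directed path of length two along one side of a 4-cycle forces the parallel path along the
other side. In a fork, the squares `v m1 w x` and `v m2 z x` are therefore both directed away from
`v` or both directed towards `v`, depending on the edge `vx`, so the boundary edges at `w` and `z`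
both leave the fork or both enter it. The edge shared by the two forks of a variable gadget leaves
one fork and enters the other, so the two remaining boundary edges are oriented oppositely as well.
-/

/-- `v` is neither a source nor a sink of the digraph `D`; in an st-orientation this holds for all
vertices other than `s` and `t`, in particular for those of the forks. -/
def IsInner (D : V → V → Prop) (v : V) : Prop :=
  (∃ u, D u v) ∧ ∃ u, D v u

theorem IsSTOrientation.isInner {G : SimpleGraph V} {D : V → V → Prop} {s t v : V}
    (hD : IsSTOrientation G D s t) (hs : v ≠ s) (ht : v ≠ t) : IsInner D v := by
  obtain ⟨-, -, -, source_unique, -, sink_unique⟩ := hD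
  constructor
  · by_contra! h
    exact hs (source_unique v h)
  · by_contra! h
    exact ht (sink_unique v h)

namespace IsOrientation

variable {G : SimpleGraph V} {D : V → V → Prop} (hor : IsOrientation G D)
include hor

theorem asymm {u v : V} (huv : D u v) : ¬ D v u :=
  (hor.2 u v (hor.1 u v huv)).1 huv

theorem directed_path_through {m p q : V} (hm : IsInner D m)
    (nbr : ∀ u, G.Adj m u → u = p ∨ u = q) : (D p m ∧ D m q) ∨ (D q m ∧ D m p) := by
  obtain ⟨⟨u, hum⟩, u', hmu'⟩ := hm
  rcases nbr u (hor.1 u m hum).symm with rfl | rfl <;>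
    rcases nbr u' (hor.1 m u' hmu') with rfl | rfl
  · exact absurd hmu' (hor.asymm hum)
  · exact Or.inl ⟨hum, hmu'⟩
  · exact Or.inr ⟨hum, hmu'⟩
  · exact absurd hmu' (hor.asymm hum)

theorem exits_third {y p q r : V} (hy : IsInner D y)
    (nbr : ∀ u, G.Adj y u → u = p ∨ u = q ∨ u = r) (hpy : D p y) (hqy : D q y) : D y r := by
  obtain ⟨-, u, hyu⟩ := hy
  rcases nbr u (hor.1 y u hyu) with rfl | rfl | rfl
  · exact absurd hyu (hor.asymm hpy)
  · exact absurd hyu (hor.asymm hqy)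
  · exact hyu

theorem enters_third {y p q r : V} (hy : IsInner D y)
    (nbr : ∀ u, G.Adj y u → u = p ∨ u = q ∨ u = r) (hyp : D y p) (hyq : D y q) : D r y := by
  obtain ⟨⟨u, huy⟩, -⟩ := hy
  rcases nbr u (hor.1 u y huy).symm with rfl | rfl | rfl
  · exact absurd huy (hor.asymm hyp)
  · exact absurd huy (hor.asymm hyq)
  · exact huy

variable (htr : ∀ u v, ¬ TransEdge D u v)
include htr

theorem not_adj_of_walk {u v w : V} (huv : D u v) (hvw : Relation.TransGen D v w) :
    ¬ G.Adj u w := by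
  intro adj
  by_cases huw : D u w
  · exact htr u w ⟨huw, v, huv, hvw⟩
  · -- `TransEdge` allows repeated vertices, so every edge of a directed cycle is transitive.
    have hwu : D w u := (hor.2 w u adj.symm).2 huw
    exact htr w u ⟨hwu, u, hwu, (hvw.head huv).tail hwu⟩

theorem parallel_path_of_square {u m v x : V} (hum : D u m) (hmv : D m v)
    (hux : G.Adj u x) (hxv : G.Adj x v) : D u x ∧ D x v := by
  constructor
  · refine (hor.2 u x hux).2 fun hxu => ?_
    exact hor.not_adj_of_walk htr hxu (.tail (.single hum) hmv) hxv
  · refine (hor.2 x v hxv).2 fun hvx => ?_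
    exact hor.not_adj_of_walk htr hum (.tail (.single hmv) hvx) hux

theorem directed_boundary_iff_of_square {v m y x b : V} (hm : IsInner D m) (hy : IsInner D y)
    (nbr_m : ∀ u, G.Adj m u → u = v ∨ u = y) (nbr_y : ∀ u, G.Adj y u → u = m ∨ u = x ∨ u = b)
    (hvx : G.Adj v x) (hxy : G.Adj x y) : D y b ↔ D v x := by
  rcases hor.directed_path_through hm nbr_m with ⟨hvm, hmy⟩ | ⟨hym, hmv⟩
  · obtain ⟨dvx, dxy⟩ := hor.parallel_path_of_square htr hvm hmy hvx hxy
    exact iff_of_true (hor.exits_third hy nbr_y hmy dxy) dvx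
  · obtain ⟨dyx, dxv⟩ := hor.parallel_path_of_square htr hym hmv hxy.symm hvx.symm
    exact iff_of_false (hor.asymm (hor.enters_third hy nbr_y hym dyx)) (hor.asymm dxv)

theorem fork_exits_b_iff_exits_c (F : ForkGadget G)
    (inner : ∀ u ∈ [F.m1, F.m2, F.w, F.z], IsInner D u) : D F.w F.b ↔ D F.z F.c := by
  simp only [List.forall_mem_cons] at inner
  obtain ⟨inner_m1, inner_m2, inner_w, inner_z, -⟩ := inner
  have hvx : G.Adj F.v F.x := (F.nbr_v F.x).2 (by simp)
  have hxw : G.Adj F.x F.w := (F.nbr_x F.w).2 (by simp)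
  have hxz : G.Adj F.x F.z := (F.nbr_x F.z).2 (by simp)
  calc D F.w F.b ↔ D F.v F.x :=
        hor.directed_boundary_iff_of_square htr inner_m1 inner_w
          (fun u => (F.nbr_m1 u).1) (fun u => (F.nbr_w u).1) hvx hxw
    _ ↔ D F.z F.c :=
        (hor.directed_boundary_iff_of_square htr inner_m2 inner_z
          (fun u => (F.nbr_m2 u).1) (fun u => (F.nbr_z u).1) hvx hxz).symm

end IsOrientation

theorem VariableGadget.isInner_forks {G : SimpleGraph V} {D : V → V → Prop} {s t : V}
    (VG : VariableGadget G s t) (hD : IsSTOrientation G D s t) :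
    (∀ u ∈ [VG.Fx.m1, VG.Fx.m2, VG.Fx.w, VG.Fx.z], IsInner D u) ∧
    ∀ u ∈ [VG.Fnx.m1, VG.Fnx.m2, VG.Fnx.w, VG.Fnx.z], IsInner D u := by
  obtain ⟨s_ne, t_ne, -⟩ := by simpa only [List.pairwise_cons] using VG.distinct
  simp only [List.mem_cons] at s_ne t_ne ⊢
  constructor <;> intro u hu <;>
    exact hD.isInner (s_ne u (by tauto)).symm (t_ne u (by tauto)).symm

theorem stmt7_general {G : SimpleGraph V} {D : V → V → Prop} (hor : IsOrientation G D)
    (htr : ∀ u v, ¬ TransEdge D u v) (F F' : ForkGadget G) (hb : F.b = F'.z) (hc : F'.c = F.w)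
    (inner : ∀ u ∈ [F.m1, F.m2, F.w, F.z], IsInner D u)
    (inner' : ∀ u ∈ [F'.m1, F'.m2, F'.w, F'.z], IsInner D u) :
    (D F.z F.c ∧ D F'.b F'.w) ∨ (D F.c F.z ∧ D F'.w F'.b) := by
  have fork : D F.w F'.z ↔ D F.z F.c := hb ▸ hor.fork_exits_b_iff_exits_c htr F inner
  have fork' : D F'.w F'.b ↔ D F'.z F.w := hc ▸ hor.fork_exits_b_iff_exits_c htr F' inner'
  have adj_c : G.Adj F.c F.z := ((F.nbr_z F.c).2 (by simp)).symm
  have adj_b : G.Adj F'.b F'.w := ((F'.nbr_w F'.b).2 (by simp)).symm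
  have adj_shared : G.Adj F.w F'.z := hb ▸ (F.nbr_w F.b).2 (by simp)
  by_cases shared : D F.w F'.z
  · exact Or.inl ⟨fork.1 shared, (hor.2 _ _ adj_b).2 (mt fork'.1 (hor.asymm shared))⟩
  · have shared' : D F'.z F.w := (hor.2 _ _ adj_shared.symm).2 shared
    exact Or.inr ⟨(hor.2 _ _ adj_c).2 (mt fork.2 shared), fork'.2 shared'⟩

/-- In any non-transitive st-orientation of a graph containing a variable gadget, exactly
one of the edges `x = {Fx.z, Fx.c}` and `x̄ = {Fnx.w, Fnx.b}` exits the gadget and the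
other enters it. -/
theorem stmt7 {V : Type*} (G : SimpleGraph V) (s t : V) (hst : s ≠ t)
    (D : V → V → Prop) (hD : IsNonTransSTOrientation G D s t)
    (VG : VariableGadget G s t) :
    (D VG.Fx.z VG.Fx.c ∧ D VG.Fnx.b VG.Fnx.w) ∨
    (D VG.Fx.c VG.Fx.z ∧ D VG.Fnx.w VG.Fnx.b) := by
  obtain ⟨inner, inner'⟩ := VG.isInner_forks hD.1
  exact stmt7_general hD.1.1 hD.2 VG.Fx VG.Fnx VG.ident_b VG.ident_c inner inner'
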